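/- Given Safety GNPTs A₁ and A₂ over the same alphabet Σ with n₁ and n₂ states and counting bounds b₁ and b₂ respectively, there exists a Safety GNPT A with n₁·n₂ states and counting bound max{b₁,b₂} such that L(A) = L(A₁) ∩ L(A₂). -/

import Mathlib

/-- `CardGT s n`: the set `s` has more than `n` elements. -/
def CardGT {α : Type*} (s : Set α) (n : ℕ) : Prop :=
  ∃ t : Finset α, ↑t ⊆ s ∧ n < t.card

/-- `CardLE s n`: the set `s` has at most `n` elements. -/
def CardLE {α : Type*} (s : Set α) (n : ℕ) : Prop :=
  ∃ t : Finset α, s ⊆ ↑t ∧ t.card ≤ n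
/-! ### Forests and trees of nodes (nonempty finite words over ℕ) -/

/-- Nodes of forests: finite words over ℕ (the forest condition requires nonemptiness). -/
abbrev Node := List ℕ

/-- `y` is a child (successor) of `x`: `y = x·c` for some `c ∈ ℕ`. -/
def IsChild (x y : Node) : Prop := ∃ c : ℕ, y = x ++ [c]

/-- A forest: a set of nonempty words over ℕ closed under nonempty prefixes. -/
def IsForest (F : Set Node) : Prop :=
  (∀ x ∈ F, x ≠ []) ∧ (∀ x y : Node, y ∈ F → IsChild x y → x ≠ [] → x ∈ F)

/-- The roots of a forest are its length-one elements. -/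
def IsRootNode (x : Node) : Prop := x.length = 1

/-- A tree: a nonempty forest all of whose elements start with the same letter. -/
def IsTree (T : Set Node) : Prop :=
  IsForest T ∧ T.Nonempty ∧ ∃ c : ℕ, ∀ x ∈ T, x.head? = some c
/-! ### Fully enriched automata and two-way graded alternating parity tree automata -/

/-- Positive Boolean formulas over atoms of type `X`. -/
inductive PosBool (X : Type) where
  | tru
  | fls
  | atom (x : X)
  | and (f g : PosBool X)
  | or (f g : PosBool X)

namespace PosBool

variable {X : Type}

/-- A set of atoms satisfies a positive Boolean formula. -/
def sats (S : Set X) : PosBool X → Prop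
  | .tru => True
  | .fls => False
  | .atom x => x ∈ S
  | .and f g => f.sats S ∧ g.sats S
  | .or f g => f.sats S ∨ g.sats S

/-- All atoms occurring in a positive Boolean formula satisfy `p`. -/
def All (p : X → Prop) : PosBool X → Prop
  | .tru => True
  | .fls => True
  | .atom x => p x
  | .and f g => f.All p ∧ g.All p
  | .or f g => f.All p ∧ g.All p

end PosBool

/-- Moves of a fully enriched automaton: `⟨n⟩`, `[n]`, `−1`, `ε`, `⟨root⟩`, `[root]`. -/
inductive Mv where
  | dia (n : ℕ)
  | box (n : ℕ)
  | up
  | stay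
  | someRoot
  | allRoots

/-- The counting parameter of a move is bounded by `b`. -/
def Mv.Bounded (b : ℕ) : Mv → Prop
  | .dia n => n ≤ b
  | .box n => n ≤ b
  | _ => True

/-- Two-way moves (no jumps to roots): the moves in `D_b⁻`. -/
def Mv.TwoWay : Mv → Prop
  | .someRoot => False
  | .allRoots => False
  | _ => True

/-- A fully enriched automaton (FEA) over the alphabet `A` with state type `Q`:
counting bound `b > 0`, transition function `δ : Q × A → B⁺(D_b × Q)`, initial state,
and a parity condition `F₁ ⊆ … ⊆ F_k = Q` of index `k`. -/
structure FEA (A Q : Type) where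
  finQ : Finite Q
  b : ℕ
  hb : 0 < b
  δ : Q → A → PosBool (Mv × Q)
  hδ : ∀ q a, (δ q a).All (fun m => m.1.Bounded b)
  init : Q
  k : ℕ
  hk : 0 < k
  F : Fin k → Set Q
  Fmono : Monotone F
  Flast : ∀ (q : Q) (h : k - 1 < k), q ∈ F ⟨k - 1, h⟩

/-- The roots of a forest. -/
def rootsOf (F : Set Node) : Set Node := {x ∈ F | x.length = 1}

/-- Executing a single atom `(d, s)` of a transition at the run node `y`
(currently reading the input node `x`). -/
def ExecOK {Q : Type} (Fo : Set Node) (Tr : Set Node) (r : Node → Node × Q)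
    (y x : Node) : Mv × Q → Prop
  | (.stay, s) => ∃ j : ℕ, y ++ [j] ∈ Tr ∧ r (y ++ [j]) = (x, s)
  | (.up, s) => 1 < x.length ∧ ∃ j : ℕ, y ++ [j] ∈ Tr ∧ r (y ++ [j]) = (x.dropLast, s)
  | (.dia n, s) => ∃ M : Finset ℕ, M.card = n + 1 ∧
      ∀ c ∈ M, x ++ [c] ∈ Fo ∧ ∃ j : ℕ, y ++ [j] ∈ Tr ∧ r (y ++ [j]) = (x ++ [c], s)
  | (.box n, s) => ∃ M : Finset ℕ, M.card ≤ n ∧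
      ∀ c : ℕ, x ++ [c] ∈ Fo → c ∉ M →
        ∃ j : ℕ, y ++ [j] ∈ Tr ∧ r (y ++ [j]) = (x ++ [c], s)
  | (.someRoot, s) => ∃ cr ∈ rootsOf Fo, ∃ j : ℕ, y ++ [j] ∈ Tr ∧ r (y ++ [j]) = (cr, s)
  | (.allRoots, s) => ∀ cr ∈ rootsOf Fo, ∃ j : ℕ, y ++ [j] ∈ Tr ∧ r (y ++ [j]) = (cr, s)

/-- A run `⟨T_r, r⟩` of a FEA on the labeled forest `⟨Fo, V⟩`. -/
structure FEA.IsRun {A Q : Type} (M : FEA A Q) (Fo : Set Node) (V : Node → A)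
    (Tr : Set Node) (r : Node → Node × Q) : Prop where
  tree : IsTree Tr
  start : ∀ z ∈ Tr, z.length = 1 → (r z).1 ∈ rootsOf Fo ∧ (r z).2 = M.init
  step : ∀ y ∈ Tr, ∃ S : Set (Mv × Q),
      (M.δ (r y).2 (V (r y).1)).sats S ∧ ∀ ds ∈ S, ExecOK Fo Tr r y (r y).1 ds

/-- An infinite path of the tree `Tr` starting at its root. -/
def IsInfPath (Tr : Set Node) (p : ℕ → Node) : Prop :=
  p 0 ∈ Tr ∧ (p 0).length = 1 ∧ ∀ i : ℕ, p (i + 1) ∈ Tr ∧ IsChild (p i) (p (i + 1))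

/-- `ParityOK k F I`: the minimal (1-based) index `i` with `I ∩ F_i ≠ ∅` is even
(the zero-based index is odd). -/
def ParityOK {Q : Type} (k : ℕ) (F : Fin k → Set Q) (I : Set Q) : Prop :=
  ∃ j : Fin k, (I ∩ F j).Nonempty ∧ Odd j.val ∧
    ∀ j' : Fin k, (I ∩ F j').Nonempty → j ≤ j'

/-- The set of states occurring infinitely often along a path of a run. -/
def InfStates {Q : Type} (r : Node → Node × Q) (p : ℕ → Node) : Set Q :=
  {q | ∀ n : ℕ, ∃ i : ℕ, n ≤ i ∧ (r (p i)).2 = q}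

/-- Acceptance of a labeled forest by a FEA. -/
def FEA.Accepts {A Q : Type} (M : FEA A Q) (Fo : Set Node) (V : Node → A) : Prop :=
  ∃ (Tr : Set Node) (r : Node → Node × Q),
    M.IsRun Fo V Tr r ∧
    ∀ p : ℕ → Node, IsInfPath Tr p → ParityOK M.k M.F (InfStates r p)

/-- A two-way graded alternating parity tree automaton (2GAPT): a FEA that runs on
trees and uses only the moves in `D_b⁻` (no jumps to roots). -/
structure GAPT2 (A Q : Type) extends FEA A Q where
  htw : ∀ q a, (δ q a).All (fun m => m.1.TwoWay)

/-- Acceptance of a labeled tree by a 2GAPT (a tree being a forest with a single root,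
the run conditions are those of FEAs). -/
def GAPT2.Accepts {A Q : Type} (M : GAPT2 A Q) (T : Set Node) (V : Node → A) : Prop :=
  M.toFEA.Accepts T V
/-! ### Graded nondeterministic parity tree automata (GNPTs) -/

/-- Boolean formulas over variables of type `Y`. -/
inductive BForm (Y : Type) where
  | tru
  | fls
  | var (y : Y)
  | not (f : BForm Y)
  | and (f g : BForm Y)
  | or (f g : BForm Y)

/-- A subset of `Y` (a letter of `2^Y`) satisfies a Boolean formula. -/
def BForm.holds {Y : Type} (s : Set Y) : BForm Y → Prop
  | .tru => True
  | .fls => False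
  | .var y => y ∈ s
  | .not f => ¬ f.holds s
  | .and f g => f.holds s ∧ g.holds s
  | .or f g => f.holds s ∨ g.holds s

/-- A constraint pair `⟨θ, ξ⟩`: a Boolean formula together with a bound
`(>, n)` (encoded `(true, n)`) or `(≤, n)` (encoded `(false, n)`). -/
abbrev CPair (Y : Type) := BForm Y × Bool × ℕ

/-- A `b`-counting constraint: a finite set (list) of constraint pairs. -/
abbrev CConstr (Y : Type) := List (CPair Y)

/-- A word, given by an index set `I` and letters `f i ∈ 2^Y` for `i ∈ I`,
satisfies a constraint pair. (Only the number of occurrences of letters satisfying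
`θ` matters, not their order.) -/
def CPairSat {ι Y : Type} (I : Set ι) (f : ι → Set Y) : CPair Y → Prop
  | (θ, true, n) => CardGT {i ∈ I | θ.holds (f i)} n
  | (θ, false, n) => CardLE {i ∈ I | θ.holds (f i)} n

/-- A word satisfies a counting constraint if it satisfies every pair in it. -/
def CSat {ι Y : Type} (I : Set ι) (f : ι → Set Y) (C : CConstr Y) : Prop :=
  ∀ p ∈ C, CPairSat I f p

/-- A graded nondeterministic parity tree automaton (GNPT) over the alphabet `A`:
the states form a finite set `Q ⊆ 2^Y` for a finite variable set `Y`, the transition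
function maps a state and a letter to a `b`-counting constraint of cardinality at most
`log |Q|`, and acceptance is by a parity condition `F₁ ⊆ … ⊆ F_k`. -/
structure GNPT (A Y : Type) where
  finY : Finite Y
  b : ℕ
  Q : Set (Set Y)
  finQ : Q.Finite
  δ : Set Y → A → CConstr Y
  hb : ∀ q ∈ Q, ∀ a, ∀ p ∈ δ q a, p.2.2 ≤ b
  hsize : ∀ q ∈ Q, ∀ a, (δ q a).length ≤ Nat.log 2 (Nat.card Q)
  init : Set Y
  hinit : init ∈ Q
  k : ℕ
  F : Fin k → Set (Set Y)
  Fmono : Monotone F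

namespace GNPT

variable {A Y : Type}

/-- A run of a GNPT on a labeled tree `⟨T, V⟩`: a `Q`-labeling `r` of the same tree `T`
such that the root is labeled by the initial state and, at every node, the word of
labels of its successors satisfies the corresponding counting constraint. -/
def IsRun (M : GNPT A Y) (T : Set Node) (V : Node → A) (r : Node → Set Y) : Prop :=
  (∀ x ∈ T, r x ∈ M.Q) ∧
  (∀ x ∈ T, x.length = 1 → r x = M.init) ∧
  ∀ x ∈ T, CSat {c : ℕ | x ++ [c] ∈ T} (fun c => r (x ++ [c])) (M.δ (r x) (V x))

/-- Acceptance of a labeled tree by a GNPT. -/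
def Accepts (M : GNPT A Y) (T : Set Node) (V : Node → A) : Prop :=
  ∃ r : Node → Set Y, M.IsRun T V r ∧
    ∀ p : ℕ → Node, IsInfPath T p →
      ParityOK M.k M.F {s | ∀ n : ℕ, ∃ i : ℕ, n ≤ i ∧ r (p i) = s}

/-- The language of a GNPT is empty: it accepts no labeled tree. -/
def LEmpty (M : GNPT A Y) : Prop :=
  ¬ ∃ (T : Set Node) (V : Node → A), IsTree T ∧ M.Accepts T V

/-- A `Forall` GNPT: every transition requires all successors to carry one
designated state. -/
def IsForall (M : GNPT A Y) : Prop :=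
  ∀ q ∈ M.Q, ∀ a : A, ∃ q' ∈ M.Q, ∃ θ : BForm Y,
    (∀ s : Set Y, θ.holds s ↔ s = q') ∧ M.δ q a = [(θ.not, false, 0)]

/-- A `Safety` GNPT: there is no acceptance condition, i.e. the parity condition
accepts every infinite path. -/
def IsSafety (M : GNPT A Y) : Prop :=
  ∀ I : Set (Set Y), I.Nonempty → ParityOK M.k M.F I

end GNPT

namespace BForm

variable {X Y : Type}

/-- Rename the variables of a Boolean formula along `g`. -/
def rename (g : X → Y) : BForm X → BForm Y
  | .tru => .tru
  | .fls => .fls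
  | .var x => .var (g x)
  | .not φ => .not (φ.rename g)
  | .and φ ψ => .and (φ.rename g) (ψ.rename g)
  | .or φ ψ => .or (φ.rename g) (ψ.rename g)

theorem holds_rename (g : X → Y) (s : Set Y) (φ : BForm X) :
    (φ.rename g).holds s ↔ φ.holds (g ⁻¹' s) := by
  induction φ <;> simp_all [rename, holds]

end BForm

/-- Rename the variables of a counting constraint along `g`. -/
def CConstr.rename {X Y : Type} (g : X → Y) (C : CConstr X) : CConstr Y :=
  C.map fun p => (p.1.rename g, p.2)

theorem cSat_rename {ι X Y : Type} (I : Set ι) (f : ι → Set Y) (g : X → Y) (C : CConstr X) :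
    CSat I f (C.rename g) ↔ CSat I (fun i => g ⁻¹' f i) C := by
  simp only [CSat, CConstr.rename, List.forall_mem_map]
  refine forall₂_congr fun p _ => ?_
  obtain ⟨θ, _ | _, n⟩ := p <;> simp only [CPairSat, BForm.holds_rename]

theorem cSat_append {ι Y : Type} (I : Set ι) (f : ι → Set Y) (C D : CConstr Y) :
    CSat I f (C ++ D) ↔ CSat I f C ∧ CSat I f D :=
  List.forall_mem_append

theorem Nat.log_add_log_le_log_mul (b : ℕ) {m n : ℕ} (hm : m ≠ 0) (hn : n ≠ 0) :
    Nat.log b m + Nat.log b n ≤ Nat.log b (m * n) := by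
  rcases Nat.lt_or_ge 1 b with hb | hb
  · refine Nat.le_log_of_pow_le hb ?_
    rw [pow_add]
    exact Nat.mul_le_mul (Nat.pow_log_le_self b hm) (Nat.pow_log_le_self b hn)
  · simp [Nat.log_of_left_le_one hb]

namespace GNPT

variable {A Y₁ Y₂ : Type}

theorem card_Q_ne_zero {Y : Type} (M : GNPT A Y) : Nat.card M.Q ≠ 0 := by
  have := M.finQ.to_subtype
  have : Nonempty M.Q := ⟨⟨M.init, M.hinit⟩⟩
  exact Nat.card_pos.ne'

/-- A labeling by states visits some state infinitely often along every infinite path. -/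
theorem IsRun.infinitely_often_nonempty {Y : Type} {M : GNPT A Y} {T : Set Node} {V : Node → A}
    {r : Node → Set Y} (hr : M.IsRun T V r) {p : ℕ → Node} (hp : IsInfPath T p) :
    {s | ∀ n : ℕ, ∃ i : ℕ, n ≤ i ∧ r (p i) = s}.Nonempty := by
  have := M.finQ.to_subtype
  have hpT : ∀ i, p i ∈ T
    | 0 => hp.1
    | i + 1 => (hp.2.2 i).1
  obtain ⟨s, hs⟩ := Finite.exists_infinite_fiber fun i => (⟨r (p i), hr.1 _ (hpT i)⟩ : M.Q)
  refine ⟨s, fun n => ?_⟩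
  obtain ⟨i, hi, hni⟩ := (Set.infinite_coe_iff.1 hs).exists_gt n
  exact ⟨i, hni.le, congrArg Subtype.val hi⟩

theorem IsSafety.accepts_iff {Y : Type} {M : GNPT A Y} (hM : M.IsSafety) (T : Set Node)
    (V : Node → A) : M.Accepts T V ↔ ∃ r, M.IsRun T V r :=
  ⟨fun ⟨r, hr, _⟩ => ⟨r, hr⟩,
    fun ⟨r, hr⟩ => ⟨r, hr, fun _ hp => hM _ (hr.infinitely_often_nonempty hp)⟩⟩

/-- The sets of variables of the product automaton both of whose components are states. -/
def prodStates (M₁ : GNPT A Y₁) (M₂ : GNPT A Y₂) : Set (Set (Y₁ ⊕ Y₂)) :=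
  Set.sumEquiv ⁻¹' (M₁.Q ×ˢ M₂.Q)

theorem card_prodStates (M₁ : GNPT A Y₁) (M₂ : GNPT A Y₂) :
    Nat.card (prodStates M₁ M₂) = Nat.card M₁.Q * Nat.card M₂.Q := by
  rw [prodStates, Nat.card_preimage_of_injective Set.sumEquiv.injective (by simp),
    ← Nat.card_prod]
  exact Nat.card_congr (Equiv.Set.prod _ _)

/-- The synchronous product of two GNPTs, with a trivial acceptance condition. -/
def prod (M₁ : GNPT A Y₁) (M₂ : GNPT A Y₂) : GNPT A (Y₁ ⊕ Y₂) where
  finY := by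
    have := M₁.finY
    have := M₂.finY
    infer_instance
  b := max M₁.b M₂.b
  Q := prodStates M₁ M₂
  finQ := (M₁.finQ.prod M₂.finQ).preimage Set.sumEquiv.injective.injOn
  δ q a := (M₁.δ (Sum.inl ⁻¹' q) a).rename Sum.inl ++ (M₂.δ (Sum.inr ⁻¹' q) a).rename Sum.inr
  hb q hq a p hp := by
    rcases List.mem_append.1 hp with hp | hp <;> obtain ⟨c, hc, rfl⟩ := List.mem_map.1 hp
    · exact le_max_of_le_left (M₁.hb _ hq.1 a c hc)
    · exact le_max_of_le_right (M₂.hb _ hq.2 a c hc)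
  hsize q hq a := by
    rw [card_prodStates, List.length_append, CConstr.rename, CConstr.rename, List.length_map,
      List.length_map]
    exact (add_le_add (M₁.hsize _ hq.1 a) (M₂.hsize _ hq.2 a)).trans
      (Nat.log_add_log_le_log_mul 2 M₁.card_Q_ne_zero M₂.card_Q_ne_zero)
  init := Set.sumEquiv.symm (M₁.init, M₂.init)
  hinit := by
    rw [prodStates, Set.mem_preimage, OrderIso.apply_symm_apply]
    exact ⟨M₁.hinit, M₂.hinit⟩
  k := 2
  F i := {_s | i = 1}
  Fmono i j hij s hs := by
    simp only [Set.mem_ofPred_eq] at hs ⊢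
    omega

theorem isSafety_prod (M₁ : GNPT A Y₁) (M₂ : GNPT A Y₂) : (M₁.prod M₂).IsSafety := by
  rintro I ⟨s, hs⟩
  exact ⟨(1 : Fin 2), ⟨s, hs, rfl⟩, odd_one, fun j ⟨_, _, hj⟩ => ge_of_eq hj⟩

theorem isRun_prod_iff (M₁ : GNPT A Y₁) (M₂ : GNPT A Y₂) (T : Set Node) (V : Node → A)
    (r : Node → Set (Y₁ ⊕ Y₂)) :
    (M₁.prod M₂).IsRun T V r ↔
      M₁.IsRun T V (fun x => Sum.inl ⁻¹' r x) ∧ M₂.IsRun T V (fun x => Sum.inr ⁻¹' r x) := by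
  have hQ (q) : q ∈ (M₁.prod M₂).Q ↔ Sum.inl ⁻¹' q ∈ M₁.Q ∧ Sum.inr ⁻¹' q ∈ M₂.Q := Iff.rfl
  have hinit (q) : q = (M₁.prod M₂).init ↔ Sum.inl ⁻¹' q = M₁.init ∧ Sum.inr ⁻¹' q = M₂.init :=
    (Set.sumEquiv.toEquiv.eq_symm_apply (x := (M₁.init, M₂.init))).trans Prod.ext_iff
  have hδ (I : Set ℕ) (f q a) : CSat I f ((M₁.prod M₂).δ q a) ↔
      CSat I (fun i => Sum.inl ⁻¹' f i) (M₁.δ (Sum.inl ⁻¹' q) a) ∧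
        CSat I (fun i => Sum.inr ⁻¹' f i) (M₂.δ (Sum.inr ⁻¹' q) a) := by
    rw [← cSat_rename, ← cSat_rename]
    exact cSat_append ..
  simp only [IsRun, hQ, hinit, hδ, imp_and, forall_and]
  tauto

theorem exists_isRun_prod_iff (M₁ : GNPT A Y₁) (M₂ : GNPT A Y₂) (T : Set Node) (V : Node → A) :
    (∃ r, (M₁.prod M₂).IsRun T V r) ↔ (∃ r, M₁.IsRun T V r) ∧ ∃ r, M₂.IsRun T V r := by
  simp only [isRun_prod_iff]
  refine ⟨fun ⟨_, h₁, h₂⟩ => ⟨⟨_, h₁⟩, ⟨_, h₂⟩⟩, fun ⟨⟨r₁, h₁⟩, ⟨r₂, h₂⟩⟩ => ?_⟩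
  have h (x) := Prod.ext_iff.1 (Set.sumEquiv.apply_symm_apply (r₁ x, r₂ x))
  refine ⟨fun x => Set.sumEquiv.symm (r₁ x, r₂ x), ?_, ?_⟩
  · convert h₁ using 2 with x
    exact (h x).1
  · convert h₂ using 2 with x
    exact (h x).2

end GNPT

/-- **Lemma 5.** Given `Safety` GNPTs `A₁` and `A₂` over the same alphabet with `n₁`,
`n₂` states and counting bounds `b₁`, `b₂`, there is a `Safety` GNPT `A` with `n₁·n₂`
states and counting bound `max{b₁, b₂}` such that `L(A) = L(A₁) ∩ L(A₂)`. -/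
theorem safety_safety_intersection
    {A Y₁ Y₂ : Type} (M₁ : GNPT A Y₁) (M₂ : GNPT A Y₂)
    (h₁ : M₁.IsSafety) (h₂ : M₂.IsSafety) :
    ∃ (Y : Type) (M : GNPT A Y),
      M.IsSafety ∧
      Nat.card M.Q = Nat.card M₁.Q * Nat.card M₂.Q ∧
      M.b = max M₁.b M₂.b ∧
      ∀ (T : Set Node) (V : Node → A), IsTree T →
        (M.Accepts T V ↔ M₁.Accepts T V ∧ M₂.Accepts T V) := by
  refine ⟨Y₁ ⊕ Y₂, M₁.prod M₂, M₁.isSafety_prod M₂, M₁.card_prodStates M₂, rfl, fun T V _ => ?_⟩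
  rw [(M₁.isSafety_prod M₂).accepts_iff, h₁.accepts_iff, h₂.accepts_iff]
  exact M₁.exists_isRun_prod_iff M₂ T V
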